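/- Let η₁ ∈ (0, 1). Let x ∈ ℝⁿ, a ∈ P_x and s ∈ ℝⁿ be such that, for every j ∈ {1, …, ω(x)}, Δ_{−K}(m^{a_j}(0) − m^{a_j}(s)) > 0 and ρ^{a_j} := −Δ_{−K}(f^{a_j}(x + s) − f^{a_j}(x)) / Δ_{−K}(m^{a_j}(0) − m^{a_j}(s)) ≥ η₁. Then F(x + s) ≺ˡ_K F(x), i.e., F(x) ⊆ F(x + s) + int K. -/

import Mathlib

/-!
A positive denominator and a ratio at least `η₁ > 0` force
`oriDist (-K) (f (a j) (x + s) - f (a j) x) < 0`, and a negative oriented distance to `-K` means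
membership in `int (-K)` (`mem_interior_of_oriDist_neg`). So each selected value `f (a j) x` lies
in `f (a j) (x + s) + int K`. By counting, the selected values are all of `Min (F x, K)`, and since
`F x` is finite, every point of `F x` is `K`-above a minimal one (`exists_minSet_le`). The inclusion
`K + int K ⊆ int K` (`IsSolidPointedCone.add_interior_mem`) concludes.
-/

open Set Filter Topology Pointwise

noncomputable section

/-- Euclidean space ℝⁿ. -/
abbrev Rvec (n : ℕ) := EuclideanSpace ℝ (Fin n)

/-- The oriented distance function Δ_A(y) := dist(y, A) − dist(y, Aᶜ). -/
def oriDist {E : Type*} [NormedAddCommGroup E] (A : Set E) (y : E) : ℝ :=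
  Metric.infDist y A - Metric.infDist y Aᶜ

/-- K-minimal elements of A: Min(A, K) = {y ∈ A : (y − K) ∩ A = {y}}. -/
def minSet {E : Type*} [AddGroup E] (K A : Set E) : Set E :=
  {y ∈ A | {z ∈ A | y - z ∈ K} = {y}}

/-- Weakly K-minimal elements of A: WMin(A, K) = {y ∈ A : (y − int K) ∩ A = ∅}. -/
def wminSet {E : Type*} [AddGroup E] [TopologicalSpace E] (K A : Set E) : Set E :=
  {y ∈ A | {z ∈ A | y - z ∈ interior K} = ∅}

/-- A closed, convex, pointed cone with nonempty interior. -/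
structure IsSolidPointedCone {E : Type*} [NormedAddCommGroup E] [NormedSpace ℝ E]
    (K : Set E) : Prop where
  closed : IsClosed K
  convex : Convex ℝ K
  cone : ∀ ⦃t : ℝ⦄, 0 ≤ t → ∀ ⦃y⦄, y ∈ K → t • y ∈ K
  pointed : K ∩ (-K) ⊆ {0}
  solid : (interior K).Nonempty

variable {n m p : ℕ}

/-- The set-valued objective F(x) = {f¹(x), …, fᵖ(x)}. -/
def Fimg (f : Fin p → Rvec n → Rvec m) (x : Rvec n) : Set (Rvec m) :=
  Set.range fun i => f i x

/-- ω(x) := |Min(F(x), K)|. -/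
def omegaF (K : Set (Rvec m)) (f : Fin p → Rvec n → Rvec m) (x : Rvec n) : ℕ :=
  (minSet K (Fimg f x)).ncard

/-- The partition set P_x: tuples a = (a₁, …, a_{ω(x)}) of indices with
each f^{a_j}(x) ∈ Min(F(x), K) and j ↦ f^{a_j}(x) an enumeration of WMin(F(x), K). -/
def partSet (K : Set (Rvec m)) (f : Fin p → Rvec n → Rvec m) (x : Rvec n) :
    Set (Fin (omegaF K f x) → Fin p) :=
  {a | (∀ j, f (a j) x ∈ minSet K (Fimg f x)) ∧
    Function.Injective (fun j => f (a j) x) ∧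
    (Set.range fun j => f (a j) x) = wminSet K (Fimg f x)}

/-- The quadratic model m^i(s) := Df^i(x)s + ½ D²f^i(x)[s, s]. -/
def model (f : Fin p → Rvec n → Rvec m) (i : Fin p) (x s : Rvec n) : Rvec m :=
  fderiv ℝ (f i) x s + (2⁻¹ : ℝ) • fderiv ℝ (fderiv ℝ (f i)) x s s

/-- Θ_x(a, s) := max_j max{Δ_{−K}(m^{a_j}(s)), Δ_{−K}(Df^{a_j}(x)s)}. -/
def Theta (K : Set (Rvec m)) (f : Fin p → Rvec n → Rvec m) (x : Rvec n)
    (a : Fin (omegaF K f x) → Fin p) (s : Rvec n) : ℝ :=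
  ⨆ j : Fin (omegaF K f x),
    max (oriDist (-K) (model f (a j) x s)) (oriDist (-K) (fderiv ℝ (f (a j)) x s))

/-- θ(x) := min over (a, s) ∈ P_x × {‖s‖ ≤ Ωmax} of Θ_x(a, s). -/
def thetaVal (K : Set (Rvec m)) (f : Fin p → Rvec n → Rvec m) (Ωmax : ℝ) (x : Rvec n) : ℝ :=
  sInf {r | ∃ a ∈ partSet K f x, ∃ s : Rvec n, ‖s‖ ≤ Ωmax ∧ r = Theta K f x a s}

/-- x is a K-critical point of F: there are no a ∈ P_x and s with
Df^{a_j}(x)s ∈ −int K for all j. -/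
def KCritical (K : Set (Rvec m)) (f : Fin p → Rvec n → Rvec m) (x : Rvec n) : Prop :=
  ¬ ∃ a ∈ partSet K f x, ∃ s : Rvec n, ∀ j, fderiv ℝ (f (a j)) x s ∈ -(interior K)

/-- Lower set-less relation: A ≼ˡ_K B iff B ⊆ A + K. -/
def lowerLe (K A B : Set (Rvec m)) : Prop := B ⊆ A + K

/-- Strict lower set-less relation: A ≺ˡ_K B iff B ⊆ A + int K. -/
def lowerLt (K A B : Set (Rvec m)) : Prop := B ⊆ A + interior K

/-- x is a regular point of F. -/
def RegularPt (K : Set (Rvec m)) (f : Fin p → Rvec n → Rvec m) (x : Rvec n) : Prop :=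
  minSet K (Fimg f x) = wminSet K (Fimg f x) ∧
    ∀ᶠ y in 𝓝 x, omegaF K f y = omegaF K f x

lemma mem_interior_of_oriDist_neg {E : Type*} [NormedAddCommGroup E] {A : Set E} {y : E}
    (h : oriDist A y < 0) : y ∈ interior A := by
  by_contra hy
  have hc : y ∈ closure Aᶜ := by rwa [closure_compl]
  have h0 := Metric.infDist_zero_of_mem_closure hc
  have h1 : 0 ≤ Metric.infDist y A := Metric.infDist_nonneg
  unfold oriDist at h
  linarith

section Cone

variable {E : Type*} [NormedAddCommGroup E] [NormedSpace ℝ E] {K : Set E}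

lemma IsSolidPointedCone.zero_mem (hK : IsSolidPointedCone K) : (0 : E) ∈ K := by
  obtain ⟨y, hy⟩ := hK.solid
  simpa using hK.cone le_rfl (interior_subset hy)

lemma IsSolidPointedCone.add_mem (hK : IsSolidPointedCone K) {y z : E} (hy : y ∈ K)
    (hz : z ∈ K) : y + z ∈ K := by
  -- `y + z` is twice the midpoint of `y` and `z`.
  have h := hK.convex hy hz (a := 2⁻¹) (b := 2⁻¹) (by norm_num) (by norm_num) (by norm_num)
  have h2 := hK.cone (t := 2) (by norm_num) h
  simpa [smul_smul] using h2

lemma IsSolidPointedCone.add_interior_mem (hK : IsSolidPointedCone K) {y z : E} (hy : y ∈ K)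
    (hz : z ∈ interior K) : y + z ∈ interior K := by
  have hsub : K + interior K ⊆ K := by
    rintro _ ⟨u, hu, v, hv, rfl⟩
    exact hK.add_mem hu (interior_subset hv)
  exact interior_maximal hsub isOpen_interior.add_left (Set.add_mem_add hy hz)

/-- Domination property: in a finite set every point is above a minimal one. -/
lemma exists_minSet_le (hK : IsSolidPointedCone K) {A : Set E} (hA : A.Finite) {y : E}
    (hy : y ∈ A) : ∃ z ∈ minSet K A, y - z ∈ K := by
  -- The strict order induced by the cone is well-founded on the finite set `A`.
  let r : E → E → Prop := fun z w => w - z ∈ K ∧ z ≠ w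
  have : IsStrictOrder E r :=
    { irrefl := fun z h => h.2 rfl
      trans := by
        rintro u v w ⟨h1, h2⟩ ⟨h3, -⟩
        refine ⟨by simpa using hK.add_mem h3 h1, ?_⟩
        rintro rfl
        have := hK.pointed ⟨h1, by simpa using h3⟩
        exact h2 (sub_eq_zero.mp this).symm }
  have hwf : A.WellFoundedOn r := hA.wellFoundedOn
  refine hwf.induction (P := fun w => ∃ z ∈ minSet K A, w - z ∈ K) hy fun w hw ih => ?_
  by_cases hmin : ∃ z ∈ A, r z w
  · obtain ⟨z, hz, hzw⟩ := hmin
    obtain ⟨u, hu, hzu⟩ := ih z hz hzw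
    exact ⟨u, hu, by simpa using hK.add_mem hzw.1 hzu⟩
  · refine ⟨w, ⟨hw, ?_⟩, by simpa using hK.zero_mem⟩
    ext z
    refine ⟨fun h => ?_, ?_⟩
    · by_contra hne
      exact hmin ⟨z, h.1, h.2, hne⟩
    · rintro rfl
      exact ⟨hw, by simpa using hK.zero_mem⟩

end Cone

/-- if all reduction ratios are at least η₁ > 0 (with positive denominators),
then F(x + s) ≺ˡ_K F(x), i.e. F(x) ⊆ F(x + s) + int K. -/
theorem stmt13 (n m p : ℕ) (K : Set (Rvec m)) (hK : IsSolidPointedCone K)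
    (f : Fin p → Rvec n → Rvec m) (hf : ∀ i, ContDiff ℝ 2 (f i))
    (η₁ : ℝ) (hη₁ : 0 < η₁) (hη₁' : η₁ < 1)
    (x : Rvec n) (a : Fin (omegaF K f x) → Fin p) (ha : a ∈ partSet K f x) (s : Rvec n)
    (hpos : ∀ j, 0 < oriDist (-K) (model f (a j) x 0 - model f (a j) x s))
    (hρ : ∀ j, η₁ ≤ -(oriDist (-K) (f (a j) (x + s) - f (a j) x)) /
        oriDist (-K) (model f (a j) x 0 - model f (a j) x s)) :
    Fimg f x ⊆ Fimg f (x + s) + interior K := by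
  have hfin : (Fimg f x).Finite := Set.finite_range _
  have hminfin : (minSet K (Fimg f x)).Finite := hfin.subset fun _ h => h.1
  obtain ⟨hmem, hinj, -⟩ := ha
  -- `a` selects `|Min (F x, K)|` distinct minimal values, hence all of them.
  have hrange : (Set.range fun j => f (a j) x) = minSet K (Fimg f x) := by
    refine Set.eq_of_subset_of_ncard_le (Set.range_subset_iff.mpr hmem) ?_ hminfin
    rw [← Set.image_univ, Set.ncard_image_of_injective _ hinj, Set.ncard_univ, Nat.card_fin]
    rfl
  intro y hy
  obtain ⟨z, hz, hyz⟩ := exists_minSet_le hK hfin hy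
  rw [← hrange] at hz
  obtain ⟨j, rfl⟩ := hz
  have hneg : oriDist (-K) (f (a j) (x + s) - f (a j) x) < 0 := by
    have h := (le_div_iff₀ (hpos j)).mp (hρ j)
    have h' := mul_pos hη₁ (hpos j)
    linarith
  have hdesc := mem_interior_of_oriDist_neg hneg
  have hneg_int : interior (-K) = -interior K :=
    ((Homeomorph.neg (Rvec m)).preimage_interior K).symm
  rw [hneg_int, Set.mem_neg, neg_sub] at hdesc
  refine ⟨f (a j) (x + s), ⟨a j, rfl⟩, y - f (a j) (x + s), ?_, by simp⟩
  simpa using hK.add_interior_mem hyz hdesc
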